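/- arXiv:2312.10212 — 3 statements merged into one kernel-verified Lean document; each statement's English description precedes it below -/
import Mathlib

section
/- Let 𝒳 be a countably generated measurable space, 𝒯 a measurable space, κ a Markov kernel from 𝒯 to 𝒳, and P_T a probability measure on 𝒯. Then (P_T ⊗ P_T)({(s, t) : κ(s) ≠ κ(t)}) = 0 if and only if there exists a measurable P_T-null set N ⊆ 𝒯 such that κ(s) = κ(t) for all s, t ∈ 𝒯 \ N, i.e. κ is constant outside a P_T-null set. -/
open MeasureTheory ProbabilityTheory

/-- Absence of drift: for a Markov kernel `κ` into a countably generated space and a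
probability measure `P_T` on the index space, the disagreement set is `P_T ⊗ P_T`-null
iff `κ` is constant outside a `P_T`-null set. -/
theorem stmt3 {𝒯 𝒳 : Type*} [MeasurableSpace 𝒯] [MeasurableSpace 𝒳]
    [MeasurableSpace.CountablyGenerated 𝒳]
    (κ : Kernel 𝒯 𝒳) [IsMarkovKernel κ]
    (PT : Measure 𝒯) [IsProbabilityMeasure PT] :
    (PT.prod PT) {q : 𝒯 × 𝒯 | κ q.1 ≠ κ q.2} = 0 ↔
      ∃ N : Set 𝒯, MeasurableSet N ∧ PT N = 0 ∧ ∀ s ∉ N, ∀ t ∉ N, κ s = κ t := by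
  constructor
  · intro h
    have h1 : ∀ᵐ q ∂(PT.prod PT), κ q.1 = κ q.2 := h
    obtain ⟨s0, hs0⟩ := (Measure.ae_ae_of_ae_prod h1).exists
    obtain ⟨N, hsub, hN, hN0⟩ := exists_measurable_superset_of_null (ae_iff.1 hs0)
    have key : ∀ t ∉ N, κ s0 = κ t := fun t ht => by
      by_contra hne
      exact ht (hsub hne)
    exact ⟨N, hN, hN0, fun s hs t ht => (key s hs).symm.trans (key t ht)⟩
  · rintro ⟨N, hN, hN0, hc⟩
    refine measure_mono_null (t := N ×ˢ Set.univ ∪ Set.univ ×ˢ N) ?_ ?_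
    · rintro ⟨s, t⟩ hst
      by_contra hn
      simp only [Set.mem_union, Set.mem_prod, Set.mem_univ, and_true, true_and, not_or] at hn
      exact hst (hc s hn.1 t hn.2)
    · exact measure_union_null (by simp [Measure.prod_prod, hN0]) (by simp [Measure.prod_prod, hN0])
end

section
/- Let 𝒯 and 𝒳 be countably generated measurable spaces such that the diagonal {(x, y) ∈ 𝒳 × 𝒳 : x = y} is measurable in the product σ-algebra. Let (Ω, 𝒜, P) be a probability space, X : 𝒯 × Ω → 𝒳 a measurable stochastic process, and P_T a probability measure on 𝒯. Then (P ⊗ P_T ⊗ P_T)({(ω, s, t) : X(t, ω) = X(s, ω)}) = 1 if and only if there exists a measurable random variable C : Ω → 𝒳 such that (P ⊗ P_T)({(ω, t) : X(t, ω) = C(ω)}) = 1. -/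
open MeasureTheory ProbabilityTheory

/-- Path-wise equality lemma: for a measurable stochastic process `X` over countably
generated spaces with measurable diagonal, `X_S = X_T` holds `P ⊗ P_T ⊗ P_T`-a.s.
iff the process is `P ⊗ P_T`-a.s. equal to a single random variable `C`. -/
theorem stmt4 {Ω 𝒯 𝒳 : Type*} [MeasurableSpace Ω] [MeasurableSpace 𝒯] [MeasurableSpace 𝒳]
    [MeasurableSpace.CountablyGenerated 𝒯] [MeasurableSpace.CountablyGenerated 𝒳]
    (hdiag : MeasurableSet {q : 𝒳 × 𝒳 | q.1 = q.2})
    (P : Measure Ω) [IsProbabilityMeasure P]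
    (X : 𝒯 × Ω → 𝒳) (hX : Measurable X)
    (PT : Measure 𝒯) [IsProbabilityMeasure PT] :
    (P.prod (PT.prod PT)) {q : Ω × 𝒯 × 𝒯 | X (q.2.2, q.1) = X (q.2.1, q.1)} = 1 ↔
      ∃ C : Ω → 𝒳, Measurable C ∧ (P.prod PT) {q : Ω × 𝒯 | X (q.2, q.1) = C q.1} = 1 := by
  have m1 : MeasurableSet {q : Ω × 𝒯 × 𝒯 | X (q.2.2, q.1) = X (q.2.1, q.1)} :=
    (show Measurable (fun q : Ω × 𝒯 × 𝒯 => (X (q.2.2, q.1), X (q.2.1, q.1))) by fun_prop) hdiag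
  have m2 : ∀ C : Ω → 𝒳, Measurable C → MeasurableSet {q : Ω × 𝒯 | X (q.2, q.1) = C q.1} :=
    fun C hC => (show Measurable (fun q : Ω × 𝒯 => (X (q.2, q.1), C q.1)) by fun_prop) hdiag
  have m3 : ∀ ω, MeasurableSet {q : 𝒯 × 𝒯 | X (q.2, ω) = X (q.1, ω)} :=
    fun ω => (show Measurable (fun q : 𝒯 × 𝒯 => (X (q.2, ω), X (q.1, ω))) by fun_prop) hdiag
  rw [← mem_ae_iff_prob_eq_one m1]
  constructor
  · intro h
    have h1 : ∀ᵐ q ∂(P.prod (PT.prod PT)), X (q.2.2, q.1) = X (q.2.1, q.1) := h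
    have h2 : ∀ᵐ q ∂((P.prod PT).prod PT), X (q.2, q.1.1) = X (q.1.2, q.1.1) :=
      (measurePreserving_prodAssoc P PT PT).quasiMeasurePreserving.ae h1
    have h3 := Measure.ae_ae_of_ae_prod h2
    have h4 : ∀ᵐ q ∂(PT.prod P), ∀ᵐ t ∂PT, X (t, q.2) = X (q.1, q.2) :=
      (Measure.measurePreserving_swap (μ := PT) (ν := P)).quasiMeasurePreserving.ae h3
    obtain ⟨s, hs⟩ := (Measure.ae_ae_of_ae_prod h4).exists
    have hC : Measurable (fun ω => X (s, ω)) := by fun_prop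
    refine ⟨fun ω => X (s, ω), hC, ?_⟩
    rw [← mem_ae_iff_prob_eq_one (m2 _ hC)]
    exact (Measure.ae_prod_iff_ae_ae (m2 _ hC)).2 hs
  · rintro ⟨C, hC, h⟩
    rw [← mem_ae_iff_prob_eq_one (m2 _ hC)] at h
    have h1 := (Measure.ae_prod_iff_ae_ae (m2 _ hC)).1 h
    refine (Measure.ae_prod_iff_ae_ae m1).2 ?_
    filter_upwards [h1] with ω hω
    refine (Measure.ae_prod_iff_ae_ae (m3 ω)).2 ?_
    filter_upwards [hω] with s hs
    filter_upwards [hω] with t ht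
    exact ht.trans hs.symm
end

section
/- Let 𝒯 = [0, 1] with a Borel probability measure P_T, let 𝒳 ⊆ ℝ^d be a measurable set, and let 𝒞 be a nonempty collection of continuous functions g : [0, 1] → ℝ^d. Assume there exists a P_T-null set N ⊆ [0, 1] such that for every t ∈ [0, 1] \ N, every x ∈ 𝒳, and every ε > 0 there exists g ∈ 𝒞 with ‖g(t) − x‖₂ < ε (i.e. the closure of {g(t) : g ∈ 𝒞} contains 𝒳 for P_T-almost every t). Let 1 ≤ p < ∞ and let x_• : [0, 1] → 𝒳 be measurable with ∫ ‖x_t‖₂^p dP_T(t) < ∞. Then for every ε > 0 there exist n ∈ ℕ, points 0 = t_0 < t_1 < … < t_n = 1, and functions g_1, …, g_n ∈ 𝒞 such that the piecewise (cadlag) function h : [0,1] → ℝ^d defined by h(t) = g_k(t) for t ∈ [t_{k−1}, t_k) (and h(1) = g_n(1)) satisfies (∫ ‖x_t − h(t)‖₂^p dP_T(t))^{1/p} < ε. -/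
open MeasureTheory
open scoped ENNReal

/-- Lemma 2, part 2: if the model class `𝒞` of continuous functions is pointwise dense
in `𝒳` for `P_T`-a.e. `t ∈ [0,1]`, then every measurable `L^p` path with values in `𝒳`
can be approximated in `L^p(P_T)` by cadlag functions piecewise contained in `𝒞`. -/
theorem stmt13 (d : ℕ)
    (PT : Measure ℝ) [IsProbabilityMeasure PT] (hPT : PT (Set.Icc (0:ℝ) 1)ᶜ = 0)
    (𝒳 : Set (EuclideanSpace ℝ (Fin d))) (h𝒳 : MeasurableSet 𝒳)
    (𝒞 : Set (ℝ → EuclideanSpace ℝ (Fin d))) (h𝒞ne : 𝒞.Nonempty)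
    (h𝒞cont : ∀ g ∈ 𝒞, ContinuousOn g (Set.Icc (0:ℝ) 1))
    (N : Set ℝ) (hNm : MeasurableSet N) (hN : PT N = 0)
    (hdense : ∀ t ∈ Set.Icc (0:ℝ) 1 \ N, ∀ x ∈ 𝒳, ∀ ε > 0, ∃ g ∈ 𝒞, ‖g t - x‖ < ε)
    (p : ℝ) (hp : 1 ≤ p)
    (x : ℝ → EuclideanSpace ℝ (Fin d)) (hxm : Measurable x)
    (hxval : ∀ t ∈ Set.Icc (0:ℝ) 1, x t ∈ 𝒳)
    (hxint : ∫⁻ t, ENNReal.ofReal (‖x t‖ ^ p) ∂PT < ⊤) :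
    ∀ ε > 0, ∃ (n : ℕ) (t : ℕ → ℝ) (g : ℕ → ℝ → EuclideanSpace ℝ (Fin d))
      (h : ℝ → EuclideanSpace ℝ (Fin d)),
      0 < n ∧ t 0 = 0 ∧ t n = 1 ∧ (∀ i < n, t i < t (i + 1)) ∧
      (∀ i, 1 ≤ i → i ≤ n → g i ∈ 𝒞) ∧
      (∀ i, 1 ≤ i → i ≤ n → ∀ s ∈ Set.Ico (t (i - 1)) (t i), h s = g i s) ∧
      h 1 = g n 1 ∧
      (∫⁻ s, ENNReal.ofReal (‖x s - h s‖ ^ p) ∂PT) ^ (1 / p) < ENNReal.ofReal ε := by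
  intro ε hε
  set q : ℝ≥0∞ := ENNReal.ofReal p with hq
  have hp0 : 0 < p := by linarith
  have hq1 : 1 ≤ q := by rw [hq]; simpa using ENNReal.ofReal_le_ofReal hp
  have hq0 : q ≠ 0 := (lt_of_lt_of_le one_pos hq1).ne'
  have hqt : q ≠ ⊤ := ENNReal.ofReal_ne_top
  have hqr : q.toReal = p := ENNReal.toReal_ofReal hp0.le
  have key : ∀ f : ℝ → EuclideanSpace ℝ (Fin d),
      (∫⁻ s, ENNReal.ofReal (‖f s‖ ^ p) ∂PT) ^ (1 / p) = eLpNorm f q PT := by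
    intro f
    rw [eLpNorm_eq_lintegral_rpow_enorm_toReal hq0 hqt, hqr]
    congr 1
    refine lintegral_congr fun s => ?_
    rw [← ENNReal.ofReal_rpow_of_nonneg (norm_nonneg _) hp0.le, ofReal_norm]
  have hxL : MemLp x q PT := by
    refine ⟨hxm.aestronglyMeasurable, ?_⟩
    rw [← key]
    exact ENNReal.rpow_lt_top_of_nonneg (by positivity) hxint.ne
  have hIcc : ∀ᵐ s ∂PT, s ∈ Set.Icc (0:ℝ) 1 := by
    rw [ae_iff]; exact hPT
  have hres : PT.restrict (Set.Icc (0:ℝ) 1) = PT := Measure.restrict_eq_self_of_ae_mem hIcc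
  obtain ⟨g0, hg0⟩ := h𝒞ne
  have hg0L : MemLp g0 q PT := by
    have hc := h𝒞cont g0 hg0
    obtain ⟨M, hM⟩ := isCompact_Icc.exists_bound_of_continuousOn hc
    refine MemLp.of_bound ?_ M (hIcc.mono hM)
    rw [← hres]
    exact hc.aestronglyMeasurable measurableSet_Icc
  set e : ℝ := ε / 7 with he
  have he0 : 0 < e := by positivity
  obtain ⟨δ, hδ, hδi⟩ := (hxL.sub hg0L).eLpNorm_indicator_le hq1 hqt he0
  obtain ⟨y, hy, hyL⟩ := hxL.exists_boundedContinuous_eLpNorm_sub_le hqt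
    (ε := ENNReal.ofReal (min e (e * (δ / 2)))) (ENNReal.ofReal_pos.2 (lt_min he0 (by positivity))).ne'
  set S : Set ℝ := {s | ENNReal.ofReal e ≤ ‖x s - y s‖ₑ} with hS
  have hSm : MeasurableSet S :=
    measurableSet_le measurable_const (hxm.sub y.continuous.measurable).enorm
  have hSle : PT S ≤ ENNReal.ofReal (δ / 2) := by
    have h1 : ENNReal.ofReal e * PT S ≤ ENNReal.ofReal e * ENNReal.ofReal (δ / 2) := by
      calc ENNReal.ofReal e * PT S ≤ ∫⁻ s, ‖x s - y s‖ₑ ∂PT :=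
            mul_meas_ge_le_lintegral (hxm.sub y.continuous.measurable).enorm _
        _ = eLpNorm (x - ⇑y) 1 PT := by rw [eLpNorm_one_eq_lintegral_enorm]; rfl
        _ ≤ eLpNorm (x - ⇑y) q PT := eLpNorm_le_eLpNorm_of_exponent_le hq1
            (hxm.sub y.continuous.measurable).aestronglyMeasurable
        _ ≤ _ := hy
        _ ≤ ENNReal.ofReal (e * (δ / 2)) := ENNReal.ofReal_le_ofReal (min_le_right _ _)
        _ = _ := ENNReal.ofReal_mul he0.le
    exact (ENNReal.mul_le_mul_iff_right (by simpa using he0) ENNReal.ofReal_ne_top).1 h1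
  set G : Set ℝ := (Set.Icc (0:ℝ) 1 \ N) \ S with hG
  have hGm : MeasurableSet G := (measurableSet_Icc.diff hNm).diff hSm
  obtain ⟨K, hKG, hK, hKm⟩ := hGm.exists_isCompact_sdiff_lt (measure_ne_top PT G)
    (ε := ENNReal.ofReal (δ / 2)) (by simp; positivity)
  have hKc : PT Kᶜ ≤ ENNReal.ofReal δ := by
    have hsub : Kᶜ ⊆ (((Set.Icc (0:ℝ) 1)ᶜ ∪ N) ∪ S) ∪ (G \ K) := by
      intro s hs
      simp only [hG, Set.mem_union, Set.mem_sdiff, Set.mem_compl_iff] at hs ⊢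
      tauto
    calc PT Kᶜ ≤ _ := measure_mono hsub
      _ ≤ PT (((Set.Icc (0:ℝ) 1)ᶜ ∪ N) ∪ S) + PT (G \ K) := measure_union_le _ _
      _ ≤ (PT ((Set.Icc (0:ℝ) 1)ᶜ ∪ N) + PT S) + PT (G \ K) := by
          gcongr; exact measure_union_le _ _
      _ ≤ ((PT ((Set.Icc (0:ℝ) 1)ᶜ) + PT N) + PT S) + PT (G \ K) := by
          gcongr; exact measure_union_le _ _
      _ ≤ ENNReal.ofReal (δ / 2) + ENNReal.ofReal (δ / 2) := by
          rw [hPT, hN]; simp only [zero_add]; gcongr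
      _ = ENNReal.ofReal δ := by
          rw [← ENNReal.ofReal_add (by positivity) (by positivity)]; congr 1; ring
  have hind := hδi Kᶜ hK.measurableSet.compl hKc
  -- local approximants
  have hloc : ∀ t : K, ∃ g ∈ 𝒞, ∃ r > 0, ∀ s ∈ Set.Icc (0:ℝ) 1, s ∈ Metric.ball (t : ℝ) r →
      ‖y s - g s‖ ≤ 4 * e := by
    rintro ⟨t, ht⟩
    have htG := hKG ht
    obtain ⟨g, hg, hgt⟩ := hdense t htG.1 (x t) (hxval t htG.1.1) e he0
    have hyx : ‖x t - y t‖ < e := by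
      have := htG.2
      simp only [hS, Set.mem_ofPred_eq, not_le] at this
      rw [← ofReal_norm] at this
      exact (ENNReal.ofReal_lt_ofReal_iff he0).1 this
    obtain ⟨r1, hr1, H1⟩ := Metric.continuousWithinAt_iff.1 (h𝒞cont g hg t htG.1.1) e he0
    obtain ⟨r2, hr2, H2⟩ := Metric.continuousAt_iff.1 (y.continuous.continuousAt (x := t)) e he0
    refine ⟨g, hg, min r1 r2, lt_min hr1 hr2, fun s hs hsb => ?_⟩
    have hsb : dist s t < min r1 r2 := hsb
    have a1 := H1 hs (hsb.trans_le (min_le_left _ _))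
    have a2 := H2 (hsb.trans_le (min_le_right _ _))
    rw [← dist_eq_norm] at hgt hyx ⊢
    have b1 := dist_triangle4 (y s) (y t) (x t) (g t)
    have b2 := dist_triangle (y s) (g t) (g s)
    rw [dist_comm (y t) (x t), dist_comm (x t) (g t)] at b1
    rw [dist_comm (g t) (g s)] at b2
    linarith
  choose γ hγ r hr hγr using hloc
  obtain ⟨ρ, hρ, hcov⟩ := lebesgue_number_lemma_of_metric hK
    (c := fun t : K => Metric.ball (t : ℝ) (r t)) (fun _ => Metric.isOpen_ball)
    (fun s hs => Set.mem_iUnion.2 ⟨⟨s, hs⟩, Metric.mem_ball_self (hr _)⟩)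
  obtain ⟨m, hm⟩ := exists_nat_one_div_lt hρ
  set n : ℕ := m + 1 with hn
  have hn0 : (0:ℝ) < n := by rw [hn]; positivity
  have hm' : 1 / (n:ℝ) < ρ := by rw [hn]; push_cast; exact hm
  set idx : ℝ → ℕ := fun s => min (⌊(n:ℝ) * s⌋₊ + 1) n with hidx
  have hidx_bd : ∀ s ∈ Set.Icc (0:ℝ) 1, (n:ℝ) * s ≤ idx s ∧ (idx s : ℝ) ≤ n * s + 1 := by
    intro s hs
    have h1 := Nat.lt_floor_add_one ((n:ℝ) * s)
    have h2 := Nat.floor_le (mul_nonneg hn0.le hs.1)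
    have h3 : (n:ℝ) * s ≤ n := by nlinarith [hs.2]
    simp only [hidx, Nat.cast_min, Nat.cast_add, Nat.cast_one]
    exact ⟨le_min h1.le h3, (min_le_left _ _).trans (by linarith)⟩
  have hch : ∀ i : ℕ, ∃ g ∈ 𝒞, ∀ s ∈ Set.Icc (0:ℝ) 1, idx s = i →
      ‖y s - g s‖ ≤ 4 * e ∨ (s ∈ Kᶜ ∧ g = g0) := by
    intro i
    by_cases hi : ∃ u ∈ K, idx u = i
    · obtain ⟨u, hu, hui⟩ := hi
      obtain ⟨t, ht⟩ := hcov u hu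
      refine ⟨γ t, hγ t, fun s hs hsi => Or.inl (hγr t s hs (ht ?_))⟩
      have b1 := hidx_bd s hs
      have b2 := hidx_bd u (hKG hu).1.1
      rw [hsi] at b1
      rw [hui] at b2
      rw [Metric.mem_ball, Real.dist_eq]
      refine lt_of_le_of_lt ?_ hm'
      rw [le_div_iff₀ hn0, ← abs_of_pos hn0, ← abs_mul, abs_le]
      constructor <;> nlinarith
    · refine ⟨g0, hg0, fun s hs hsi => Or.inr ⟨fun hsK => hi ⟨s, hsK, hsi⟩, rfl⟩⟩
  choose g hg hgs using hch
  refine ⟨n, fun i => (i:ℝ) / n, g, fun s => g (idx s) s, by omega, by simp, div_self hn0.ne',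
    ?_, fun i _ _ => hg i, ?_, ?_, ?_⟩
  · intro i _
    push_cast
    gcongr
    linarith
  · intro i hi1 hin s hs
    obtain ⟨j, rfl⟩ : ∃ j, i = j + 1 := ⟨i - 1, by omega⟩
    simp only [Nat.add_sub_cancel] at hs
    have h1 : (j:ℝ) ≤ n * s := by
      have := (div_le_iff₀ hn0).1 hs.1; linarith
    have h2 : (n:ℝ) * s < j + 1 := by
      have := (lt_div_iff₀ hn0).1 hs.2; push_cast at this; linarith
    have h3 : ⌊(n:ℝ) * s⌋₊ = j :=
      (Nat.floor_eq_iff (le_trans (Nat.cast_nonneg j) h1)).2 ⟨h1, h2⟩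
    have : idx s = j + 1 := by
      simp only [hidx, h3]; omega
    simp only [this]
  · have : idx 1 = n := by
      simp only [hidx, mul_one, Nat.floor_natCast]; omega
    simp only [this]
  · rw [key (fun s => x s - g (idx s) s)]
    set I : ℝ → EuclideanSpace ℝ (Fin d) := Set.indicator Kᶜ (x - g0) with hI
    have hImeas : AEStronglyMeasurable I PT :=
      ((hxL.sub hg0L).aestronglyMeasurable).indicator hK.measurableSet.compl
    have hxy : AEStronglyMeasurable (x - ⇑y) PT :=
      (hxm.sub y.continuous.measurable).aestronglyMeasurable
    set F1 : ℝ → ℝ := fun s => ‖(x - ⇑y) s‖ with hF1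
    set F2 : ℝ → ℝ := fun _ => 4 * e with hF2
    set F3 : ℝ → ℝ := fun s => ‖I s‖ with hF3
    have hb : ∀ᵐ s ∂PT, ‖x s - g (idx s) s‖ ≤ (F1 + F2 + F3) s := by
      filter_upwards [hIcc] with s hs
      simp only [Pi.add_apply, hF1, hF2, hF3, Pi.sub_apply]
      rcases hgs (idx s) s hs rfl with h | ⟨hsK, hgg⟩
      · have := norm_sub_le_norm_sub_add_norm_sub (x s) (y s) (g (idx s) s)
        have := norm_nonneg (I s)
        linarith
      · have : I s = x s - g0 s := by rw [hI, Set.indicator_of_mem hsK]; rfl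
        rw [hgg, this]
        have := norm_nonneg (x s - y s)
        linarith
    calc eLpNorm (fun s => x s - g (idx s) s) q PT ≤ eLpNorm (F1 + F2 + F3) q PT :=
          eLpNorm_mono_ae_real hb
      _ ≤ eLpNorm (F1 + F2) q PT + eLpNorm F3 q PT :=
          eLpNorm_add_le (hxy.norm.add aestronglyMeasurable_const) hImeas.norm hq1
      _ ≤ (eLpNorm F1 q PT + eLpNorm F2 q PT) + eLpNorm F3 q PT := by
          gcongr; exact eLpNorm_add_le hxy.norm aestronglyMeasurable_const hq1
      _ ≤ (ENNReal.ofReal e + ENNReal.ofReal (4 * e)) + ENNReal.ofReal e := by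
          gcongr
          · rw [hF1, eLpNorm_norm]
            exact hy.trans (ENNReal.ofReal_le_ofReal (min_le_left _ _))
          · rw [hF2, eLpNorm_const _ hq0 (IsProbabilityMeasure.ne_zero PT)]
            simp only [measure_univ, ENNReal.one_rpow, mul_one]
            rw [← ofReal_norm, Real.norm_of_nonneg (by positivity)]
          · rw [hF3, eLpNorm_norm]
            exact hind
      _ = ENNReal.ofReal (6 * e) := by
          rw [← ENNReal.ofReal_add (by positivity) (by positivity),
            ← ENNReal.ofReal_add (by positivity) (by positivity)]
          congr 1; ring
      _ < ENNReal.ofReal ε := by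
          rw [ENNReal.ofReal_lt_ofReal_iff hε]; linarith
end
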